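/- Let q ∈ ℋ_e and let f(x) = ψ(x)^{-1}∫_{−∞}^{x}(q(y) − Φ(q))ψ(y)dy. Then for every n ∈ ℕ₀: ∫_ℝ f(y) H_n(y) ψ(y) dy = −(1/(n+1)) ∫_ℝ q(y) H_{n+1}(y) ψ(y) dy. -/

import Mathlib

open MeasureTheory Polynomial

/-- Density of the standard normal distribution. -/
noncomputable def gaussD (x : ℝ) : ℝ := (Real.sqrt (2 * Real.pi))⁻¹ * Real.exp (-(x ^ 2) / 2)

/-- Expectation of `g` with respect to the standard normal distribution, `Φ(g)`. -/
noncomputable def PhiInt (g : ℝ → ℝ) : ℝ := ∫ x, g x * gaussD x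

/-- The class `ℋ` of monotonically decreasing, left-continuous functions `ℝ → [0,1]`. -/
def memH (h : ℝ → ℝ) : Prop :=
  (∀ x, h x ∈ Set.Icc (0 : ℝ) 1) ∧ Antitone h ∧
    ∀ x, ContinuousWithinAt h (Set.Iic x) x

/-- The class `ℋ_d` of members of `ℋ` that are differentiable with bounded derivative. -/
def memHd (h : ℝ → ℝ) : Prop :=
  memH h ∧ Differentiable ℝ h ∧ ∃ M : ℝ, ∀ x, |deriv h x| ≤ M

/-- The class `ℋ_e = ℋ_d ∪ {x ↦ x·h(x) : h ∈ ℋ_d}`. -/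
def memHe (q : ℝ → ℝ) : Prop :=
  memHd q ∨ ∃ h : ℝ → ℝ, memHd h ∧ ∀ x, q x = x * h x

/-- The Stein solution `f` for the function `q`. -/
noncomputable def steinF0 (q : ℝ → ℝ) (x : ℝ) : ℝ :=
  (gaussD x)⁻¹ * ∫ y in Set.Iic x, (q y - PhiInt q) * gaussD y

/-- The `n`-th probabilists' Hermite polynomial, evaluated at a real number. -/
noncomputable def hermiteR (n : ℕ) (y : ℝ) : ℝ := Polynomial.aeval y (Polynomial.hermite n)

/-! Write `f ψ = G` with `G x = ∫_{-∞}^x (q - Φ(q)) ψ`. As `∫ (q - Φ(q)) ψ = 0`, also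
`G x = -∫_x^∞ (q - Φ(q)) ψ`; using the first form for `x ≤ 0` and the second for `x > 0`, Fubini
gives `∫ P' G = -∫ (P - P(0)) (q - Φ(q)) ψ = -∫ P (q - Φ(q)) ψ` for every polynomial `P`, as soon as
`q ψ` has moments up to the degree of `P`. For `P = H_{n+1}` we have `P' = (n+1) H_n` and
`∫ H_{n+1} ψ = 0`. -/

open Set ProbabilityTheory
open scoped Interval

section Fubini

variable {a : ℝ} {p g : ℝ → ℝ} {μ : Measure ℝ}

/-- The integrand on the plane which integrates to `(∫ x in a..y, p x) * g y` along horizontal lines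
and to `p x` times a one-sided tail integral of `g` along vertical lines. The factor `±1` is the
orientation of the interval from `a` to `y`. -/
noncomputable def tailKernel (a : ℝ) (p g : ℝ → ℝ) : ℝ × ℝ → ℝ :=
  {z : ℝ × ℝ | z.1 ∈ Ι a z.2}.indicator fun z => p z.1 * ((if a ≤ z.2 then 1 else -1) * g z.2)

lemma tailKernel_eq_indicator_uIoc (a : ℝ) (p g : ℝ → ℝ) (y : ℝ) :
    (fun x => tailKernel a p g (x, y)) =
      (Ι a y).indicator fun x => p x * ((if a ≤ y then 1 else -1) * g y) := rfl

lemma tailKernel_of_lt {x : ℝ} (hx : a < x) (p g : ℝ → ℝ) :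
    (fun y => tailKernel a p g (x, y)) = (Ici x).indicator fun y => p x * g y := by
  ext y
  by_cases hy : x ≤ y
  · simp [tailKernel, mem_uIoc, hx, hy, hx.le.trans hy]
  · simp [tailKernel, mem_uIoc, hy, hx.not_ge]

lemma tailKernel_of_le {x : ℝ} (hx : x ≤ a) (p g : ℝ → ℝ) :
    (fun y => tailKernel a p g (x, y)) = (Iio x).indicator fun y => -(p x * g y) := by
  ext y
  by_cases hy : y < x
  · simp [tailKernel, mem_uIoc, hx, hy, hy.trans_le hx]
  · simp [tailKernel, mem_uIoc, hy, hx.not_gt]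

lemma measurableSet_setOf_fst_mem_uIoc_snd (a : ℝ) :
    MeasurableSet {z : ℝ × ℝ | z.1 ∈ Ι a z.2} := by
  have min_lt : MeasurableSet {z : ℝ × ℝ | min a z.2 < z.1} :=
    measurableSet_lt (by fun_prop) (by fun_prop)
  have le_max : MeasurableSet {z : ℝ × ℝ | z.1 ≤ max a z.2} :=
    measurableSet_le (by fun_prop) (by fun_prop)
  exact min_lt.inter le_max

lemma integral_tailKernel_fst (y : ℝ) :
    ∫ x, tailKernel a p g (x, y) = (∫ x in a..y, p x) * g y := by
  rw [tailKernel_eq_indicator_uIoc, integral_indicator measurableSet_uIoc, integral_mul_const,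
    intervalIntegral.intervalIntegral_eq_integral_uIoc, smul_eq_mul]
  ring

lemma integral_norm_tailKernel_fst (y : ℝ) :
    ∫ x, ‖tailKernel a p g (x, y)‖ = ‖(∫ x in a..y, |p x|) * g y‖ := by
  have norm_sign : ‖(if a ≤ y then 1 else -1 : ℝ)‖ = 1 := by split_ifs <;> simp
  calc ∫ x, ‖tailKernel a p g (x, y)‖
      = ∫ x in Ι a y, |p x| * |g y| := by
        rw [← integral_indicator measurableSet_uIoc]
        refine integral_congr_ae (.of_forall fun x => ?_)
        simp only [congrFun (tailKernel_eq_indicator_uIoc a p g y) x,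
          norm_indicator_eq_indicator_norm, norm_mul, norm_sign, one_mul, Real.norm_eq_abs]
    _ = ‖(∫ x in a..y, |p x|) * g y‖ := by
        rw [integral_mul_const, norm_mul, intervalIntegral.norm_intervalIntegral_eq,
          Real.norm_of_nonneg (integral_nonneg fun x => abs_nonneg (p x)), Real.norm_eq_abs]

lemma integral_tailKernel_snd (hg : Integrable g μ) (hg₀ : ∫ y, g y ∂μ = 0) (x : ℝ) :
    ∫ y, tailKernel a p g (x, y) ∂μ = -(p x * ∫ y in Iio x, g y ∂μ) := by
  rcases lt_or_ge a x with hx | hx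
  · have tail : ∫ y in Ici x, g y ∂μ = -∫ y in Iio x, g y ∂μ := by
      rw [eq_neg_iff_add_eq_zero, ← hg₀, ← integral_add_compl measurableSet_Ici hg, compl_Ici]
    rw [tailKernel_of_lt hx, integral_indicator measurableSet_Ici, integral_const_mul, tail,
      mul_neg]
  · rw [tailKernel_of_le hx, integral_indicator measurableSet_Iio, integral_neg, integral_const_mul]

lemma integrable_tailKernel [SFinite μ] (hp : LocallyIntegrable p) (hg : AEStronglyMeasurable g μ)
    (hpg : Integrable (fun y => (∫ x in a..y, |p x|) * g y) μ) :
    Integrable (tailKernel a p g) (volume.prod μ) := by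
  have sign_measurable : Measurable fun y : ℝ => if a ≤ y then (1 : ℝ) else -1 :=
    .ite measurableSet_Ici measurable_const measurable_const
  have kernel_measurable : AEStronglyMeasurable (tailKernel a p g) (volume.prod μ) :=
    (hp.aestronglyMeasurable.comp_fst.mul
      (sign_measurable.aestronglyMeasurable.mul hg).comp_snd).indicator
        (measurableSet_setOf_fst_mem_uIoc_snd a)
  refine (integrable_prod_iff' kernel_measurable).2 ⟨.of_forall fun y => ?_, ?_⟩
  · rw [tailKernel_eq_indicator_uIoc, integrable_indicator_iff measurableSet_uIoc]
    exact ((hp.integrableOn_isCompact isCompact_uIcc).mono_set uIoc_subset_uIcc).mul_const _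
  · simpa only [integral_norm_tailKernel_fst] using hpg.norm

theorem integral_mul_integral_Iio_of_integral_eq_zero [SFinite μ] (hp : LocallyIntegrable p)
    (hg : Integrable g μ) (hg₀ : ∫ y, g y ∂μ = 0)
    (hpg : Integrable (fun y => (∫ x in a..y, |p x|) * g y) μ) :
    ∫ x, p x * ∫ y in Iio x, g y ∂μ = -∫ y, (∫ x in a..y, p x) * g y ∂μ := by
  have swap := integral_integral_swap (f := fun x y => tailKernel a p g (x, y))
    (integrable_tailKernel hp hg.aestronglyMeasurable hpg)
  simp only [integral_tailKernel_fst, integral_tailKernel_snd hg hg₀, integral_neg] at swap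
  rw [← swap, neg_neg]

end Fubini

section PolynomialPrimitive

variable {P : ℝ[X]} {g : ℝ → ℝ} {μ : Measure ℝ}

lemma integrable_eval_mul (hg : ∀ k ≤ P.natDegree, Integrable (fun y => y ^ k * g y) μ) :
    Integrable (fun y => P.eval y * g y) μ := by
  simp only [eval_eq_sum_range, Finset.sum_mul, mul_assoc]
  exact integrable_finsetSum _ fun k hk =>
    (hg k (Nat.lt_succ_iff.1 (Finset.mem_range.1 hk))).const_mul _

lemma abs_eval_derivative_le (P : ℝ[X]) {x r : ℝ} (hxr : |x| ≤ r) :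
    |P.derivative.eval x| ≤
      ∑ k ∈ Finset.range (P.natDegree + 1), |P.coeff k| * k * r ^ (k - 1) := by
  rw [derivative_eval, sum_over_range _ (by simp)]
  refine (Finset.abs_sum_le_sum_abs _ _).trans (Finset.sum_le_sum fun k _ => ?_)
  rw [abs_mul, abs_mul, abs_pow, Nat.abs_cast]
  gcongr

lemma norm_integral_abs_eval_derivative_le (P : ℝ[X]) (y : ℝ) :
    ‖∫ x in (0 : ℝ)..y, |P.derivative.eval x|‖ ≤
      ∑ k ∈ Finset.range (P.natDegree + 1), |P.coeff k| * k * |y| ^ k := by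
  have bound : ∀ x ∈ Ι 0 y, ‖|P.derivative.eval x|‖ ≤
      ∑ k ∈ Finset.range (P.natDegree + 1), |P.coeff k| * k * |y| ^ (k - 1) := fun x hx => by
    rw [Real.norm_eq_abs, abs_abs]
    exact abs_eval_derivative_le P (by simpa using abs_sub_left_of_mem_uIcc (uIoc_subset_uIcc hx))
  refine (intervalIntegral.norm_integral_le_of_norm_le_const bound).trans_eq ?_
  rw [sub_zero, Finset.sum_mul]
  refine Finset.sum_congr rfl fun k _ => ?_
  rcases k with - | k
  · simp
  · rw [Nat.add_sub_cancel, pow_succ, mul_assoc]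

lemma integrable_integral_abs_eval_derivative_mul
    (hg : ∀ k ≤ P.natDegree, Integrable (fun y => y ^ k * g y) μ) :
    Integrable (fun y => (∫ x in (0 : ℝ)..y, |P.derivative.eval x|) * g y) μ := by
  have g_measurable : AEStronglyMeasurable g μ := by
    simpa using (hg 0 (Nat.zero_le _)).aestronglyMeasurable
  have primitive_continuous : Continuous fun y => ∫ x in (0 : ℝ)..y, |P.derivative.eval x| :=
    intervalIntegral.continuous_primitive
      (fun _ _ => P.derivative.continuous.abs.intervalIntegrable _ _) 0
  have bound_integrable : Integrable (fun y =>
      ∑ k ∈ Finset.range (P.natDegree + 1), |P.coeff k| * k * ‖y ^ k * g y‖) μ :=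
    integrable_finsetSum _ fun k hk =>
      (hg k (Nat.lt_succ_iff.1 (Finset.mem_range.1 hk))).norm.const_mul _
  refine bound_integrable.mono' (primitive_continuous.aestronglyMeasurable.mul g_measurable)
    (.of_forall fun y => ?_)
  calc ‖(∫ x in (0 : ℝ)..y, |P.derivative.eval x|) * g y‖
      ≤ (∑ k ∈ Finset.range (P.natDegree + 1), |P.coeff k| * k * |y| ^ k) * ‖g y‖ := by
        rw [norm_mul]
        gcongr
        exact norm_integral_abs_eval_derivative_le P y
    _ = ∑ k ∈ Finset.range (P.natDegree + 1), |P.coeff k| * k * ‖y ^ k * g y‖ := by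
        simp only [Finset.sum_mul, norm_mul, norm_pow, Real.norm_eq_abs, mul_assoc]

theorem integral_eval_derivative_mul_integral_Iio [SFinite μ]
    (hg : ∀ k ≤ P.natDegree, Integrable (fun y => y ^ k * g y) μ) (hg₀ : ∫ y, g y ∂μ = 0) :
    ∫ x, P.derivative.eval x * ∫ y in Iio x, g y ∂μ = -∫ y, P.eval y * g y ∂μ := by
  have g_integrable : Integrable g μ := by simpa using hg 0 (Nat.zero_le _)
  have ftc (y : ℝ) : ∫ x in (0 : ℝ)..y, P.derivative.eval x = P.eval y - P.eval 0 :=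
    intervalIntegral.integral_eq_sub_of_hasDerivAt (fun x _ => P.hasDerivAt x)
      (P.derivative.continuous.intervalIntegrable _ _)
  rw [integral_mul_integral_Iio_of_integral_eq_zero P.derivative.continuous.locallyIntegrable
    g_integrable hg₀ (integrable_integral_abs_eval_derivative_mul hg)]
  simp only [ftc, sub_mul]
  rw [integral_sub (integrable_eval_mul hg) (g_integrable.const_mul _), integral_const_mul, hg₀,
    mul_zero, sub_zero]

end PolynomialPrimitive

section Gaussian

lemma gaussD_eq_gaussianPDFReal : gaussD = gaussianPDFReal 0 1 := by
  ext x
  simp [gaussD, gaussianPDFReal]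

lemma gaussD_pos (x : ℝ) : 0 < gaussD x :=
  gaussD_eq_gaussianPDFReal ▸ gaussianPDFReal_pos 0 1 x one_ne_zero

lemma integral_gaussD : ∫ x, gaussD x = 1 :=
  gaussD_eq_gaussianPDFReal ▸ integral_gaussianPDFReal_eq_one 0 one_ne_zero

lemma hasDerivAt_gaussD (x : ℝ) : HasDerivAt gaussD (-x * gaussD x) x := by
  have exponent : HasDerivAt (fun x : ℝ => -(x ^ 2) / 2) (-x) x :=
    ((hasDerivAt_pow 2 x).neg.div_const 2).congr_deriv (by simp; ring)
  exact (exponent.exp.const_mul _).congr_deriv (by rw [gaussD]; ring)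

lemma integrable_pow_mul_gaussD (k : ℕ) : Integrable fun y => y ^ k * gaussD y := by
  have moment := (integrable_rpow_mul_exp_neg_mul_sq (b := 1 / 2) (by norm_num) (s := k)
    (neg_one_lt_zero.trans_le k.cast_nonneg)).const_mul (√(2 * Real.pi))⁻¹
  refine moment.congr (.of_forall fun y => ?_)
  simp only [Real.rpow_natCast, gaussD]
  ring_nf

end Gaussian

section SteinSolution

variable {q : ℝ → ℝ}

lemma steinF0_mul_gaussD (q : ℝ → ℝ) (x : ℝ) :
    steinF0 q x * gaussD x = ∫ y in Iio x, (q y - PhiInt q) * gaussD y := by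
  rw [steinF0, mul_right_comm, inv_mul_cancel₀ (gaussD_pos x).ne', one_mul,
    integral_Iic_eq_integral_Iio]

lemma integral_sub_PhiInt_mul_gaussD (hq : Integrable fun y => q y * gaussD y) :
    ∫ y, (q y - PhiInt q) * gaussD y = 0 := by
  have gaussD_integrable : Integrable gaussD := by simpa using integrable_pow_mul_gaussD 0
  simp only [sub_mul]
  rw [integral_sub hq (gaussD_integrable.const_mul _), integral_const_mul, integral_gaussD, PhiInt,
    mul_one, sub_self]

theorem integral_steinF0_mul_eval_derivative {P : ℝ[X]}
    (hq : ∀ k ≤ P.natDegree, Integrable fun y => y ^ k * (q y * gaussD y)) :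
    ∫ y, steinF0 q y * P.derivative.eval y * gaussD y =
      PhiInt q * (∫ y, P.eval y * gaussD y) - ∫ y, q y * P.eval y * gaussD y := by
  have centred : ∀ k ≤ P.natDegree,
      Integrable fun y => y ^ k * ((q y - PhiInt q) * gaussD y) := fun k hk => by
    refine ((hq k hk).sub ((integrable_pow_mul_gaussD k).const_mul (PhiInt q))).congr
      (.of_forall fun y => ?_)
    simp only [Pi.sub_apply]
    ring
  have q_integrable : Integrable fun y => q y * gaussD y := by simpa using hq 0 (Nat.zero_le _)
  calc ∫ y, steinF0 q y * P.derivative.eval y * gaussD y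
      = ∫ x, P.derivative.eval x * ∫ y in Iio x, (q y - PhiInt q) * gaussD y := by
        simp only [← steinF0_mul_gaussD, mul_left_comm, mul_assoc]
    _ = -∫ y, P.eval y * ((q y - PhiInt q) * gaussD y) :=
        integral_eval_derivative_mul_integral_Iio centred
          (integral_sub_PhiInt_mul_gaussD q_integrable)
    _ = -∫ y, (P.eval y * (q y * gaussD y) - PhiInt q * (P.eval y * gaussD y)) := by
        congr! 3
        ring
    _ = PhiInt q * (∫ y, P.eval y * gaussD y) - ∫ y, q y * P.eval y * gaussD y := by
        rw [integral_sub (integrable_eval_mul hq)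
          ((integrable_eval_mul fun k _ => integrable_pow_mul_gaussD k).const_mul _),
          integral_const_mul, neg_sub]
        simp only [mul_left_comm, mul_assoc]

end SteinSolution

section Hermite

lemma derivative_hermite_succ (n : ℕ) :
    derivative (hermite (n + 1)) = ((n : ℤ[X]) + 1) * hermite n := by
  induction n with
  | zero => simp
  | succ n ih =>
    rw [hermite_succ (n + 1), derivative_sub, derivative_mul, ih, derivative_mul, hermite_succ n]
    simp only [derivative_add, derivative_natCast, derivative_one, derivative_X, Nat.cast_add,
      Nat.cast_one]
    ring

lemma eval_map_hermite (n : ℕ) (y : ℝ) :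
    ((hermite n).map (algebraMap ℤ ℝ)).eval y = hermiteR n y :=
  eval_map_algebraMap _ _

lemma eval_derivative_map_hermite_succ (n : ℕ) (y : ℝ) :
    ((hermite (n + 1)).map (algebraMap ℤ ℝ)).derivative.eval y = (n + 1) * hermiteR n y := by
  rw [derivative_map, derivative_hermite_succ, Polynomial.map_mul, eval_mul, eval_map_hermite]
  simp

lemma natDegree_map_hermite (n : ℕ) : ((hermite n).map (algebraMap ℤ ℝ)).natDegree = n := by
  rw [(hermite_monic n).natDegree_map, natDegree_hermite]

lemma integrable_hermiteR_mul_gaussD (n : ℕ) : Integrable fun y => hermiteR n y * gaussD y := by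
  simpa only [eval_map_hermite] using
    integrable_eval_mul (P := (hermite n).map (algebraMap ℤ ℝ))
      fun k _ => integrable_pow_mul_gaussD k

lemma hasDerivAt_hermiteR_mul_gaussD (n : ℕ) (y : ℝ) :
    HasDerivAt (fun y => hermiteR n y * gaussD y) (-(hermiteR (n + 1) y * gaussD y)) y := by
  refine (((hermite n).hasDerivAt_aeval y).mul (hasDerivAt_gaussD y)).congr_deriv ?_
  simp only [hermiteR, hermite_succ, map_sub, map_mul, aeval_X]
  ring

lemma integral_hermiteR_succ_mul_gaussD (n : ℕ) : ∫ y, hermiteR (n + 1) y * gaussD y = 0 := by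
  have neg_integral_eq_zero := integral_eq_zero_of_hasDerivAt_of_integrable
    (hasDerivAt_hermiteR_mul_gaussD n) (integrable_hermiteR_mul_gaussD (n + 1)).neg
    (integrable_hermiteR_mul_gaussD n)
  rwa [integral_neg, neg_eq_zero] at neg_integral_eq_zero

end Hermite

section ClassH

variable {h q : ℝ → ℝ}

lemma memH.integrable_pow_mul_mul_gaussD (hh : memH h) (k : ℕ) :
    Integrable fun y => y ^ k * (h y * gaussD y) := by
  obtain ⟨h_mem, h_antitone, -⟩ := hh
  refine ((integrable_pow_mul_gaussD k).bdd_mul (c := 1)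
    h_antitone.measurable.aestronglyMeasurable (.of_forall fun y => ?_)).congr
      (.of_forall fun y => mul_left_comm _ _ _)
  rw [Real.norm_of_nonneg (h_mem y).1]
  exact (h_mem y).2

lemma memHe.integrable_pow_mul_mul_gaussD (hq : memHe q) (k : ℕ) :
    Integrable fun y => y ^ k * (q y * gaussD y) := by
  rcases hq with ⟨hq, -⟩ | ⟨h, ⟨hh, -⟩, q_eq⟩
  · exact hq.integrable_pow_mul_mul_gaussD k
  · simpa only [q_eq, pow_succ, mul_assoc] using hh.integrable_pow_mul_mul_gaussD (k + 1)

end ClassH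

theorem stein_solution_hermite_identity_general (q : ℝ → ℝ) (n : ℕ)
    (hq : ∀ k ≤ n + 1, Integrable fun y => y ^ k * (q y * gaussD y)) :
    ∫ y, steinF0 q y * hermiteR n y * gaussD y =
      -(1 / ((n : ℝ) + 1)) * ∫ y, q y * hermiteR (n + 1) y * gaussD y := by
  have parts := integral_steinF0_mul_eval_derivative
    (P := (hermite (n + 1)).map (algebraMap ℤ ℝ)) (by rwa [natDegree_map_hermite])
  simp only [eval_derivative_map_hermite_succ, eval_map_hermite,
    integral_hermiteR_succ_mul_gaussD, mul_zero, zero_sub] at parts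
  have factor : ∫ y, steinF0 q y * ((n + 1) * hermiteR n y) * gaussD y =
      (n + 1) * ∫ y, steinF0 q y * hermiteR n y * gaussD y := by
    rw [← integral_const_mul]
    simp only [mul_left_comm, mul_assoc]
  rw [one_div, neg_mul_comm, ← parts, factor, inv_mul_cancel_left₀ n.cast_add_one_ne_zero]

/-- for `q ∈ ℋ_e` and all `n ∈ ℕ₀`,
`∫ f·H_n·ψ = −(1/(n+1)) ∫ q·H_{n+1}·ψ`. -/
theorem stein_solution_hermite_identity (q : ℝ → ℝ) (hq : memHe q) (n : ℕ) :
    ∫ y, steinF0 q y * hermiteR n y * gaussD y =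
      -(1 / ((n : ℝ) + 1)) * ∫ y, q y * hermiteR (n + 1) y * gaussD y :=
  stein_solution_hermite_identity_general q n fun k _ => hq.integrable_pow_mul_mul_gaussD k
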